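/- Let S(l,2) be the signed double star consisting of a positive central edge z₁z₂, together with l ≥ 0 positive pendant edges z₁v₁,…,z₁v_l and two negative pendant edges z₁u₁, z₁u₂ attached at z₁, and 2 positive pendant edges z₂w₁, z₂w₂ attached at z₂. Then every additively graceful labeling g of S(l,2) satisfies g(z₁)=0, {g(u₁),g(u₂)}={1,2}, {g(v₁),…,g(v_l)}={3,4,…,l+2}, g(z₂)=l+3, and {g(w₁),g(w₂)}={l+4,l+5}; that is, the additively graceful labeling of S(l,2) is unique up to permutation of labels among the u's, among the v's, and among the w's. -/

import Mathlib

/-- A signed graph on vertex type `V`: a finite set of positive edges and a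
finite set of negative edges, disjoint from one another, with no loops. -/
structure SignedGraph (V : Type) [DecidableEq V] where
  posEdges : Finset (Sym2 V)
  negEdges : Finset (Sym2 V)
  disjoint : Disjoint posEdges negEdges
  pos_not_diag : ∀ e ∈ posEdges, ¬ e.IsDiag
  neg_not_diag : ∀ e ∈ negEdges, ¬ e.IsDiag

/-- Induced label on a positive edge: `|f u - f v|`. -/
def posLabel {V : Type} (f : V → ℕ) : Sym2 V → ℕ :=
  Sym2.lift ⟨fun u v => Nat.dist (f u) (f v), fun u v => Nat.dist_comm _ _⟩

/-- Induced label on a negative edge: `f u + f v`. -/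
def negLabel {V : Type} (f : V → ℕ) : Sym2 V → ℕ :=
  Sym2.lift ⟨fun u v => f u + f v, fun u v => Nat.add_comm _ _⟩

/-- `f` is an additively graceful labeling of the signed graph `S`:
it is an injection into `{0, 1, …, m + ⌈(n+1)/2⌉}` whose induced labels on the
positive edges are exactly `{1, …, m}` and on the negative edges exactly
`{1, …, n}`, where `m` (resp. `n`) is the number of positive (negative) edges.
(Note that `⌈(n+1)/2⌉ = (n+2)/2` with natural-number division.) -/
def IsAddGraceful {V : Type} [DecidableEq V] (S : SignedGraph V) (f : V → ℕ) : Prop :=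
  Function.Injective f ∧
  (∀ v : V, f v ≤ S.posEdges.card + (S.negEdges.card + 2) / 2) ∧
  S.posEdges.image (posLabel f) = Finset.Icc 1 S.posEdges.card ∧
  S.negEdges.image (negLabel f) = Finset.Icc 1 S.negEdges.card

/-- Vertex type of a double star: the two centers `z₁, z₂`, the `a` positive
pendant neighbours and `b` negative pendant neighbours of `z₁`, and the `c`
positive pendant neighbours of `z₂`. -/
abbrev DSV (a b c : ℕ) : Type := (Unit ⊕ Unit) ⊕ (Fin a ⊕ Fin b ⊕ Fin c)

/-- the first central vertex `z₁` -/
def z1 {a b c : ℕ} : DSV a b c := Sum.inl (Sum.inl ())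
/-- the second central vertex `z₂` -/
def z2 {a b c : ℕ} : DSV a b c := Sum.inl (Sum.inr ())
/-- the end `vᵢ` of the `i`-th positive pendant edge at `z₁` -/
def vv {a b c : ℕ} (i : Fin a) : DSV a b c := Sum.inr (Sum.inl i)
/-- the end `uᵢ` of the `i`-th negative pendant edge at `z₁` -/
def uu {a b c : ℕ} (i : Fin b) : DSV a b c := Sum.inr (Sum.inr (Sum.inl i))
/-- the end `wᵢ` of the `i`-th positive pendant edge at `z₂` -/
def ww {a b c : ℕ} (i : Fin c) : DSV a b c := Sum.inr (Sum.inr (Sum.inr i))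

/-- The signed double star with a *positive* central edge `z₁z₂`,
`a` positive and `b` negative pendant edges at `z₁`, and `c` positive pendant
edges at `z₂`. -/
def doubleStarPos (a b c : ℕ) : SignedGraph (DSV a b c) where
  posEdges :=
    {s(z1, z2)} ∪ Finset.univ.image (fun i : Fin a => s(z1, vv i)) ∪
      Finset.univ.image (fun i : Fin c => s(z2, ww i))
  negEdges := Finset.univ.image (fun i : Fin b => s(z1, uu i))
  disjoint := by
    rw [Finset.disjoint_left]
    intro e he1 he2
    simp only [Finset.mem_union, Finset.mem_singleton, Finset.mem_image,
      Finset.mem_univ, true_and] at he1 he2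
    obtain ⟨j, rfl⟩ := he2
    rcases he1 with (h | ⟨i, h⟩) | ⟨i, h⟩ <;>
      simp [z1, z2, vv, uu, ww, Sym2.eq_iff] at h
  pos_not_diag := by
    intro e he
    simp only [Finset.mem_union, Finset.mem_singleton, Finset.mem_image,
      Finset.mem_univ, true_and] at he
    rcases he with (rfl | ⟨i, rfl⟩) | ⟨i, rfl⟩ <;>
      simp [z1, z2, vv, ww, Sym2.mk_isDiag_iff]
  neg_not_diag := by
    intro e he
    simp only [Finset.mem_image, Finset.mem_univ, true_and] at he
    obtain ⟨i, rfl⟩ := he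
    simp [z1, uu, Sym2.mk_isDiag_iff]

/-!
Forget the upper bound on the labels and let `z₁` carry `b ≥ 2` negative and `z₂` carry `b`
positive pendant edges. The negative labels force `g z₁ = 0` and give the `uᵢ` the labels
`1, …, b`: the only other way to produce the sum `1` is `g z₁ = 1`, and then the sum `2` repeats
the label of `z₁`. Positive edges at `z₁` are now labelled by their far ends, so `z₂` and the `vᵢ`
carry `l + 1` distinct values in `{b + 1, …, l + b + 1}`, hence all of them. Every `wᵢ` therefore
lies above `l + b + 1`, and the edge labels `1, …, b` can only occur on the edges `z₂wᵢ`. The label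
`1` puts `z₂` at `l + b + 1`, directly below the `wᵢ`, and the rest follows. For `b ≥ 3` the labels
exceed the bound imposed on an additively graceful labeling, so only without that bound do such
labelings exist.
-/

theorem Icc_add_one_eq_pair (n : ℕ) : Finset.Icc n (n + 1) = {n, n + 1} := by
  rw [← Finset.insert_Icc_add_one_left_eq_Icc (n.le_add_right 1), Finset.Icc_self]

/-- Additive gracefulness without the upper bound on the vertex labels: an injective labeling by
natural numbers whose positive and negative edge labels are `{1, …, m}` and `{1, …, n}`. -/
structure IsUnboundedAddGraceful {V : Type} [DecidableEq V] (S : SignedGraph V) (f : V → ℕ) :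
    Prop where
  injective : Function.Injective f
  image_posLabel : S.posEdges.image (posLabel f) = Finset.Icc 1 S.posEdges.card
  image_negLabel : S.negEdges.image (negLabel f) = Finset.Icc 1 S.negEdges.card

theorem IsAddGraceful.isUnboundedAddGraceful {V : Type} [DecidableEq V] {S : SignedGraph V}
    {f : V → ℕ} (hf : IsAddGraceful S f) : IsUnboundedAddGraceful S f :=
  ⟨hf.1, hf.2.2.1, hf.2.2.2⟩

section DoubleStar

variable {a b c : ℕ}

theorem vv_injective : Function.Injective (vv : Fin a → DSV a b c) :=
  Sum.inr_injective.comp Sum.inl_injective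

theorem uu_injective : Function.Injective (uu : Fin b → DSV a b c) :=
  Sum.inr_injective.comp (Sum.inr_injective.comp Sum.inl_injective)

theorem ww_injective : Function.Injective (ww : Fin c → DSV a b c) :=
  Sum.inr_injective.comp (Sum.inr_injective.comp Sum.inr_injective)

theorem mem_posEdges_doubleStarPos {e : Sym2 (DSV a b c)} :
    e ∈ (doubleStarPos a b c).posEdges ↔
      e = s(z1, z2) ∨ (∃ i, e = s(z1, vv i)) ∨ ∃ i, e = s(z2, ww i) := by
  simp [doubleStarPos, eq_comm]

theorem mem_negEdges_doubleStarPos {e : Sym2 (DSV a b c)} :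
    e ∈ (doubleStarPos a b c).negEdges ↔ ∃ i, e = s(z1, uu i) := by
  simp [doubleStarPos, eq_comm]

theorem card_posEdges_doubleStarPos : (doubleStarPos a b c).posEdges.card = a + c + 1 := by
  have vv_edge_injective : Function.Injective fun i : Fin a => (s(z1, vv i) : Sym2 (DSV a b c)) :=
    fun _ _ h => vv_injective (Sym2.congr_right.mp h)
  have ww_edge_injective : Function.Injective fun i : Fin c => (s(z2, ww i) : Sym2 (DSV a b c)) :=
    fun _ _ h => ww_injective (Sym2.congr_right.mp h)
  rw [doubleStarPos, Finset.card_union_of_disjoint, Finset.card_union_of_disjoint,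
    Finset.card_image_of_injective _ vv_edge_injective,
    Finset.card_image_of_injective _ ww_edge_injective, Finset.card_singleton, Finset.card_fin,
    Finset.card_fin]
  · ring
  · simp [z1, z2, vv]
  · simp [Finset.disjoint_left, z1, z2, vv, ww]

theorem card_negEdges_doubleStarPos : (doubleStarPos a b c).negEdges.card = b := by
  have uu_edge_injective : Function.Injective fun i : Fin b => (s(z1, uu i) : Sym2 (DSV a b c)) :=
    fun _ _ h => uu_injective (Sym2.congr_right.mp h)
  rw [doubleStarPos, Finset.card_image_of_injective _ uu_edge_injective, Finset.card_fin]

end DoubleStar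

namespace IsUnboundedAddGraceful

section

variable {a b c : ℕ} {g : DSV a b c → ℕ}

theorem posLabel_mem_Icc (hg : IsUnboundedAddGraceful (doubleStarPos a b c) g)
    {e : Sym2 (DSV a b c)} (he : e ∈ (doubleStarPos a b c).posEdges) :
    posLabel g e ∈ Finset.Icc 1 (a + c + 1) := by
  rw [← card_posEdges_doubleStarPos (b := b), ← hg.image_posLabel]
  exact Finset.mem_image_of_mem _ he

theorem image_z1_add_uu (hg : IsUnboundedAddGraceful (doubleStarPos a b c) g) :
    Finset.univ.image (fun i : Fin b => g z1 + g (uu i)) = Finset.Icc 1 b := by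
  have image_eq := hg.image_negLabel
  rwa [card_negEdges_doubleStarPos, doubleStarPos, Finset.image_image] at image_eq

theorem exists_z1_add_uu_eq (hg : IsUnboundedAddGraceful (doubleStarPos a b c) g) {k : ℕ}
    (hk : k ∈ Finset.Icc 1 b) : ∃ i, g z1 + g (uu i) = k := by
  simpa [← hg.image_z1_add_uu] using hk

theorem z1_eq_zero (hg : IsUnboundedAddGraceful (doubleStarPos a b c) g) (hb : 2 ≤ b) :
    g z1 = 0 := by
  obtain ⟨i, sum_eq_one⟩ := hg.exists_z1_add_uu_eq (k := 1) (Finset.mem_Icc.mpr ⟨le_rfl, by omega⟩)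
  obtain ⟨j, sum_eq_two⟩ := hg.exists_z1_add_uu_eq (k := 2) (Finset.mem_Icc.mpr ⟨one_le_two, hb⟩)
  have label_ne : g z1 ≠ g (uu j) := hg.injective.ne (by simp [z1, uu])
  omega

theorem image_uu (hg : IsUnboundedAddGraceful (doubleStarPos a b c) g) (hb : 2 ≤ b) :
    Finset.univ.image (fun i : Fin b => g (uu i)) = Finset.Icc 1 b := by
  simpa [hg.z1_eq_zero hb] using hg.image_z1_add_uu

theorem notMem_Icc_of_forall_ne_uu (hg : IsUnboundedAddGraceful (doubleStarPos a b c) g)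
    (hb : 2 ≤ b) {x : DSV a b c} (hx : ∀ i, x ≠ uu i) : g x ∉ Finset.Icc 1 b := by
  simpa [← hg.image_uu hb, hg.injective.eq_iff, eq_comm] using hx

theorem posLabel_z1 (hg : IsUnboundedAddGraceful (doubleStarPos a b c) g) (hb : 2 ≤ b)
    (x : DSV a b c) : posLabel g s(z1, x) = g x := by
  simp [posLabel, hg.z1_eq_zero hb, Nat.dist_eq_sub_of_le]

theorem label_mem_Icc_of_adj_z1 (hg : IsUnboundedAddGraceful (doubleStarPos a b c) g) (hb : 2 ≤ b)
    {x : DSV a b c} (hx : s(z1, x) ∈ (doubleStarPos a b c).posEdges) :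
    g x ∈ Finset.Icc (b + 1) (a + c + 1) := by
  have not_uu : ∀ i, x ≠ uu i := by
    rintro i rfl
    exact Finset.disjoint_left.mp (doubleStarPos a b c).disjoint hx
      (mem_negEdges_doubleStarPos.mpr ⟨i, rfl⟩)
  have label_mem := hg.posLabel_mem_Icc hx
  have label_notMem := hg.notMem_Icc_of_forall_ne_uu hb not_uu
  rw [hg.posLabel_z1 hb] at label_mem
  simp only [Finset.mem_Icc] at label_mem label_notMem ⊢
  omega

theorem z2_mem_Icc (hg : IsUnboundedAddGraceful (doubleStarPos a b c) g) (hb : 2 ≤ b) :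
    g z2 ∈ Finset.Icc (b + 1) (a + c + 1) :=
  hg.label_mem_Icc_of_adj_z1 hb (mem_posEdges_doubleStarPos.mpr (.inl rfl))

theorem vv_mem_Icc (hg : IsUnboundedAddGraceful (doubleStarPos a b c) g) (hb : 2 ≤ b) (i : Fin a) :
    g (vv i) ∈ Finset.Icc (b + 1) (a + c + 1) :=
  hg.label_mem_Icc_of_adj_z1 hb (mem_posEdges_doubleStarPos.mpr (.inr (.inl ⟨i, rfl⟩)))

theorem z2_notMem_image_vv (hg : IsUnboundedAddGraceful (doubleStarPos a b c) g) :
    g z2 ∉ Finset.univ.image fun i : Fin a => g (vv i) := by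
  simp [hg.injective.eq_iff, z2, vv]

end

section

variable {a b : ℕ} {g : DSV a b b → ℕ}

theorem insert_z2_image_vv (hg : IsUnboundedAddGraceful (doubleStarPos a b b) g) (hb : 2 ≤ b) :
    insert (g z2) (Finset.univ.image fun i : Fin a => g (vv i)) =
      Finset.Icc (b + 1) (a + b + 1) := by
  apply Finset.eq_of_subset_of_card_le
  · simpa [Finset.insert_subset_iff, Finset.image_subset_iff] using
      ⟨Finset.mem_Icc.mp (hg.z2_mem_Icc hb), fun i => Finset.mem_Icc.mp (hg.vv_mem_Icc hb i)⟩
  · have vv_label_injective : Function.Injective fun i : Fin a => g (vv i) :=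
      hg.injective.comp vv_injective
    rw [Finset.card_insert_of_notMem hg.z2_notMem_image_vv,
      Finset.card_image_of_injective _ vv_label_injective, Finset.card_fin, Nat.card_Icc]
    omega

theorem lt_ww (hg : IsUnboundedAddGraceful (doubleStarPos a b b) g) (hb : 2 ≤ b) (i : Fin b) :
    a + b + 1 < g (ww i) := by
  have ne_zero : g (ww i) ≠ 0 := by
    rw [← hg.z1_eq_zero hb]
    exact hg.injective.ne (by simp [z1, ww])
  have notMem_low : g (ww i) ∉ Finset.Icc 1 b :=
    hg.notMem_Icc_of_forall_ne_uu hb (by simp [uu, ww])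
  have notMem_mid : g (ww i) ∉ Finset.Icc (b + 1) (a + b + 1) := by
    simp [← hg.insert_z2_image_vv hb, hg.injective.eq_iff, z2, vv, ww]
  simp only [Finset.mem_Icc] at notMem_low notMem_mid
  omega

theorem exists_ww_eq_z2_add (hg : IsUnboundedAddGraceful (doubleStarPos a b b) g) (hb : 2 ≤ b)
    {k : ℕ} (hk : k ∈ Finset.Icc 1 b) : ∃ i, g (ww i) = g z2 + k := by
  have k_mem : k ∈ (doubleStarPos a b b).posEdges.image (posLabel g) := by
    rw [hg.image_posLabel, card_posEdges_doubleStarPos]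
    exact Finset.Icc_subset_Icc_right (by omega) hk
  obtain ⟨e, he, label_eq⟩ := Finset.mem_image.mp k_mem
  have z2_bounds := Finset.mem_Icc.mp (hg.z2_mem_Icc hb)
  rw [Finset.mem_Icc] at hk
  rcases mem_posEdges_doubleStarPos.mp he with rfl | ⟨i, rfl⟩ | ⟨i, rfl⟩
  · rw [hg.posLabel_z1 hb] at label_eq
    omega
  · have vv_bounds := Finset.mem_Icc.mp (hg.vv_mem_Icc hb i)
    rw [hg.posLabel_z1 hb] at label_eq
    omega
  · have ww_bound := hg.lt_ww hb i
    simp only [posLabel, Sym2.lift_mk, Nat.dist] at label_eq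
    exact ⟨i, by omega⟩

theorem z2_eq (hg : IsUnboundedAddGraceful (doubleStarPos a b b) g) (hb : 2 ≤ b) :
    g z2 = a + b + 1 := by
  obtain ⟨i, ww_eq⟩ := hg.exists_ww_eq_z2_add hb (k := 1) (Finset.mem_Icc.mpr ⟨le_rfl, by omega⟩)
  have ww_bound := hg.lt_ww hb i
  have z2_bounds := Finset.mem_Icc.mp (hg.z2_mem_Icc hb)
  omega

theorem image_vv (hg : IsUnboundedAddGraceful (doubleStarPos a b b) g) (hb : 2 ≤ b) :
    Finset.univ.image (fun i : Fin a => g (vv i)) = Finset.Icc (b + 1) (a + b) := by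
  rw [← Finset.erase_insert hg.z2_notMem_image_vv, hg.insert_z2_image_vv hb, hg.z2_eq hb]
  ext x
  simp only [Finset.mem_erase, Finset.mem_Icc]
  omega

theorem image_ww (hg : IsUnboundedAddGraceful (doubleStarPos a b b) g) (hb : 2 ≤ b) :
    Finset.univ.image (fun i : Fin b => g (ww i)) = Finset.Icc (a + b + 2) (a + 2 * b + 1) := by
  symm
  apply Finset.eq_of_subset_of_card_le
  · intro x hx
    rw [Finset.mem_Icc] at hx
    obtain ⟨i, ww_eq⟩ := hg.exists_ww_eq_z2_add hb (k := x - (a + b + 1))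
      (by rw [Finset.mem_Icc]; omega)
    rw [hg.z2_eq hb] at ww_eq
    exact Finset.mem_image.mpr ⟨i, Finset.mem_univ i, by omega⟩
  · calc
      _ ≤ b := Finset.card_image_le.trans_eq (Finset.card_fin b)
      _ = (Finset.Icc (a + b + 2) (a + 2 * b + 1)).card := by rw [Nat.card_Icc]; omega

end

end IsUnboundedAddGraceful

theorem doubleStar_twoNeg_r2_unique_general (l b : ℕ) (hb : 2 ≤ b) (g : DSV l b b → ℕ)
    (hg : IsUnboundedAddGraceful (doubleStarPos l b b) g) :
    g z1 = 0 ∧ Finset.univ.image (fun i : Fin b => g (uu i)) = Finset.Icc 1 b ∧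
      Finset.univ.image (fun i : Fin l => g (vv i)) = Finset.Icc (b + 1) (l + b) ∧
      g z2 = l + b + 1 ∧
      Finset.univ.image (fun i : Fin b => g (ww i)) = Finset.Icc (l + b + 2) (l + 2 * b + 1) :=
  ⟨hg.z1_eq_zero hb, hg.image_uu hb, hg.image_vv hb, hg.z2_eq hb, hg.image_ww hb⟩

/-- Every additively graceful labeling `g` of the signed
double star with positive central edge `z₁z₂`, `l` positive and `2` negative
pendant edges at `z₁`, and `2` positive pendant edges at `z₂`, satisfies
`g z₁ = 0`, `{g u₁, g u₂} = {1, 2}`, `{g v₁, …, g v_l} = {3, …, l+2}`,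
`g z₂ = l + 3` and `{g w₁, g w₂} = {l+4, l+5}`; i.e. the labeling is unique up
to permutations among the `u`'s, the `v`'s and the `w`'s. -/
theorem doubleStar_twoNeg_r2_unique (l : ℕ) (g : DSV l 2 2 → ℕ)
    (hg : IsAddGraceful (doubleStarPos l 2 2) g) :
    g z1 = 0 ∧ ({g (uu 0), g (uu 1)} : Finset ℕ) = {1, 2} ∧
      Finset.univ.image (fun i : Fin l => g (vv i)) = Finset.Icc 3 (l + 2) ∧
      g z2 = l + 3 ∧ ({g (ww 0), g (ww 1)} : Finset ℕ) = {l + 4, l + 5} := by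
  simpa [Fin.univ_succ, Icc_add_one_eq_pair, Icc_add_one_eq_pair 1] using
    doubleStar_twoNeg_r2_unique_general l 2 le_rfl g hg.isUnboundedAddGraceful
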